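/- arXiv:1606.08974 — 4 statements merged into one kernel-verified Lean document; each statement's English description precedes it below -/
import Mathlib

section
/- Let n ≥ 2, let α ∈ (0,1), and let c_α ∈ ℝ be such that the probability that τ_n ≤ c_α equals α when X_1,…,X_n are i.i.d. Uniform[0,1]. Then for every measurable test φ : ℝ^n → {0,1} that is scale-free (i.e. φ(t·x) = φ(x) for all t > 0 and all x ∈ (0,∞)^n) and has level at most α under the uniform model (i.e. E[φ(X)] ≤ α when X_1,…,X_n are i.i.d. Uniform[0,1]), the power of φ under the exponential model is at most that of the test 1{τ_n ≤ c_α}: E[φ(X)] ≤ P(τ_n ≤ c_α) when X_1,…,X_n are i.i.d. Exponential(1). -/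
open MeasureTheory ProbabilityTheory

/-- The uniform probability measure on `[0, θ]`. -/
noncomputable def uniformMeasure (θ : ℝ) : Measure ℝ :=
  ENNReal.ofReal θ⁻¹ • volume.restrict (Set.Icc 0 θ)

/-- The joint law of an i.i.d. sample of size `n` from `Uniform[0, θ]`. -/
noncomputable def iidUniform (n : ℕ) (θ : ℝ) : Measure (Fin n → ℝ) :=
  Measure.pi fun _ => uniformMeasure θ

/-- The joint law of an i.i.d. sample of size `n` from `Exponential(r)`. -/
noncomputable def iidExp (n : ℕ) (r : ℝ) : Measure (Fin n → ℝ) :=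
  Measure.pi fun _ => expMeasure r

/-- Sample maximum `x_(n)`. -/
noncomputable def sampleMax {n : ℕ} (x : Fin n → ℝ) : ℝ := ⨆ i, x i

/-- Empirical mean. -/
noncomputable def sampleMean {n : ℕ} (x : Fin n → ℝ) : ℝ := (∑ i, x i) / n

/-- The mean/max statistic `τ_n`. -/
noncomputable def tau {n : ℕ} (x : Fin n → ℝ) : ℝ := sampleMean x / sampleMax x

open Set

/-- Tonelli's theorem for a product of functions of one coordinate each. -/
theorem lintegral_fin_prod_eq_prod {n : ℕ} {E : Type*} [MeasurableSpace E] (μ : Fin n → Measure E)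
    [∀ i, SigmaFinite (μ i)] {f : Fin n → E → ENNReal} (hf : ∀ i, Measurable (f i)) :
    ∫⁻ x, ∏ i, f i (x i) ∂(Measure.pi μ) = ∏ i, ∫⁻ x, f i x ∂(μ i) := by
  induction n with
  | zero => simp
  | succ n ih =>
    rw [← (measurePreserving_piFinSuccAbove μ 0).symm.lintegral_comp_emb
      (MeasurableEquiv.measurableEmbedding _), Fin.prod_univ_succ]
    simp_rw [MeasurableEquiv.piFinSuccAbove_symm_apply, Fin.insertNthEquiv,
      Fin.prod_univ_succ, Fin.insertNth_zero, Equiv.coe_fn_mk, Fin.cons_succ,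
      Fin.zero_succAbove, Fin.cons_zero, cast_eq]
    rw [lintegral_prod_mul (g := fun y : Fin n → E ↦ ∏ i, f i.succ (y i)) (hf 0).aemeasurable
      (Finset.measurable_fun_prod _ fun i _ ↦
        (hf i.succ).comp (measurable_pi_apply i)).aemeasurable, ih _ fun i ↦ hf i.succ]

/-- A finite product of measures with densities has the product density. -/
theorem pi_withDensity {n : ℕ} {E : Type*} [MeasurableSpace E] (μ : Fin n → Measure E)
    [∀ i, SigmaFinite (μ i)] {f : Fin n → E → ENNReal} (hf : ∀ i, Measurable (f i))
    [∀ i, SigmaFinite ((μ i).withDensity (f i))] :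
    Measure.pi (fun i ↦ (μ i).withDensity (f i)) =
      (Measure.pi μ).withDensity fun x ↦ ∏ i, f i (x i) := by
  refine Measure.pi_eq fun s hs ↦ ?_
  rw [withDensity_apply _ (MeasurableSet.univ_pi hs), Measure.restrict_pi_pi,
    lintegral_fin_prod_eq_prod _ hf]
  simp_rw [withDensity_apply _ (hs _)]

theorem expMeasure_one_eq_withDensity :
    expMeasure 1 =
      (volume.restrict (Ioi 0)).withDensity fun x ↦ ENNReal.ofReal (Real.exp (-x)) := by
  rw [Measure.restrict_congr_set Ioi_ae_eq_Ici, ← withDensity_indicator measurableSet_Ici,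
    expMeasure, gammaMeasure]
  congr 1
  ext x
  by_cases hx : 0 ≤ x <;> simp [gammaPDF, gammaPDFReal, hx]

theorem lintegral_iidExp_one (n : ℕ) {f : (Fin n → ℝ) → ENNReal} (hf : Measurable f) :
    ∫⁻ x, f x ∂(iidExp n 1) =
      ∫⁻ x in univ.pi fun _ ↦ Ioi 0, ENNReal.ofReal (Real.exp (-∑ i, x i)) * f x := by
  have hp : IsProbabilityMeasure (expMeasure 1) := isProbabilityMeasure_expMeasure one_pos
  rw [expMeasure_one_eq_withDensity] at hp
  have hg : Measurable fun x : ℝ ↦ ENNReal.ofReal (Real.exp (-x)) := by fun_prop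
  rw [iidExp, expMeasure_one_eq_withDensity, pi_withDensity _ fun _ ↦ hg,
    lintegral_withDensity_eq_lintegral_mul _ (by fun_prop) hf, ← Measure.restrict_pi_pi]
  simp [← ENNReal.ofReal_prod_of_nonneg, Real.exp_nonneg, ← Real.exp_sum, volume_pi]

theorem iidUniform_one_eq_restrict (n : ℕ) :
    iidUniform n 1 = volume.restrict (univ.pi fun _ ↦ Ioo 0 1) := by
  simp [iidUniform, uniformMeasure, volume_pi, Measure.restrict_pi_pi,
    Measure.restrict_congr_set Ioo_ae_eq_Icc]

theorem measurable_sampleMax (n : ℕ) : Measurable (sampleMax (n := n)) := by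
  unfold sampleMax
  exact Measurable.iSup (fun i ↦ measurable_pi_apply i)

theorem sampleMax_smul {n : ℕ} {t : ℝ} (ht : 0 ≤ t) (x : Fin n → ℝ) :
    sampleMax (t • x) = t * sampleMax x := by
  simp [sampleMax, Real.mul_iSup_of_nonneg ht]

theorem sampleMax_lt_iff {n : ℕ} [NeZero n] {x : Fin n → ℝ} {t : ℝ} :
    sampleMax x < t ↔ ∀ i, x i < t := by
  refine ⟨fun h i ↦ (le_ciSup (finite_range x).bddAbove i).trans_lt h, fun h ↦ ?_⟩
  obtain ⟨i, hi⟩ := exists_eq_ciSup_of_finite (f := x)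
  exact hi.symm.trans_lt (h i)

theorem sampleMax_pos {n : ℕ} [NeZero n] {x : Fin n → ℝ} (hx : ∀ i, 0 < x i) : 0 < sampleMax x :=
  (hx 0).trans_le (le_ciSup (finite_range x).bddAbove 0)

theorem measurable_tau (n : ℕ) : Measurable (tau (n := n)) := by
  have := measurable_sampleMax n
  unfold tau sampleMean
  fun_prop

theorem tau_smul {n : ℕ} {t : ℝ} (ht : 0 < t) (x : Fin n → ℝ) : tau (t • x) = tau x := by
  simp only [tau, sampleMean, sampleMax_smul ht.le, Pi.smul_apply, smul_eq_mul, ← Finset.mul_sum]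
  rw [mul_div_assoc, mul_div_mul_left _ _ ht.ne']

theorem tau_pos {n : ℕ} [NeZero n] {x : Fin n → ℝ} (hx : ∀ i, 0 < x i) : 0 < tau x := by
  have := Finset.sum_pos (fun i _ ↦ hx i) Finset.univ_nonempty
  have := sampleMax_pos hx
  have : (0 : ℝ) < n := by exact_mod_cast NeZero.pos n
  unfold tau sampleMean
  positivity

theorem lintegral_Ioi_mul_rpow {n : ℕ} [NeZero n] {m : ℝ} (hm : 0 < m) :
    ∫⁻ t in Ioi m, ENNReal.ofReal (n * t ^ (-(n : ℝ) - 1)) = ENNReal.ofReal ((m ^ n)⁻¹) := by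
  have hn : (0 : ℝ) < n := by exact_mod_cast NeZero.pos n
  have hlt : -(n : ℝ) - 1 < -1 := by linarith
  rw [← ofReal_integral_eq_lintegral_ofReal
    ((integrableOn_Ioi_rpow_of_lt hlt hm).const_mul _), integral_const_mul,
    integral_Ioi_rpow_of_lt hlt hm]
  · rw [sub_add_cancel, Real.rpow_neg hm.le, Real.rpow_natCast]
    congr 1
    field_simp
  · filter_upwards [ae_restrict_mem measurableSet_Ioi] with t ht
    have : 0 < t := hm.trans ht
    positivity

theorem lintegral_Ioi_pow_mul_exp {n : ℕ} [NeZero n] {r : ℝ} (hr : 0 < r) :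
    ∫⁻ t in Ioi (0 : ℝ), ENNReal.ofReal (t ^ ((n : ℝ) - 1) * Real.exp (-(r * t))) =
      ENNReal.ofReal (Real.Gamma n * (r ^ n)⁻¹) := by
  have hn : (0 : ℝ) < n := by exact_mod_cast NeZero.pos n
  have key := Real.integral_rpow_mul_exp_neg_mul_Ioi hn hr
  rw [← ofReal_integral_eq_lintegral_ofReal, key]
  · rw [Real.rpow_natCast, one_div, inv_pow, mul_comm]
  · refine .of_integral_ne_zero ?_
    rw [key]
    have := Real.Gamma_pos_of_pos hn
    positivity
  · filter_upwards [ae_restrict_mem measurableSet_Ioi] with t (ht : 0 < t)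
    positivity

theorem lintegral_eq_mul_lintegral_comp_smul {n : ℕ} {t : ℝ} (ht : 0 < t)
    {f : (Fin n → ℝ) → ENNReal} (hf : Measurable f) :
    ∫⁻ x, f x = ENNReal.ofReal (t ^ n) * ∫⁻ x, f (t • x) := by
  rw [← lintegral_map hf (measurable_const_smul t), Measure.map_addHaar_smul _ ht.ne',
    lintegral_smul_measure, smul_eq_mul, ← mul_assoc, ← ENNReal.ofReal_mul (by positivity)]
  simp [abs_of_pos ht, ht.ne']

/-- The integral of a scale-free function against the exponential model equals an integral over the
unit cube with a density depending on `tau` only. The weight `sampleMax x ^ n` is undone by the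
integral of `n * t ^ (-n - 1)` over `t > sampleMax x`, which allows rescaling `x` by `t`. -/
theorem lintegral_iidExp_eq_lintegral_cube {n : ℕ} [NeZero n] {f : (Fin n → ℝ) → ENNReal}
    (hf : Measurable f)
    (hscale : ∀ t : ℝ, 0 < t → ∀ x : Fin n → ℝ, (∀ i, 0 < x i) → f (t • x) = f x) :
    ∫⁻ x, f x ∂(iidExp n 1) = ∫⁻ x in univ.pi fun _ ↦ Ioo 0 1,
      f x * ENNReal.ofReal (n * Real.Gamma n * ((n * tau x) ^ n)⁻¹) := by
  have hn : (0 : ℝ) < n := by exact_mod_cast NeZero.pos n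
  set B : Set (Fin n → ℝ) := univ.pi fun _ ↦ Ioo 0 1 with hB
  set k : ℝ → ENNReal := fun t ↦ ENNReal.ofReal (n * t ^ (-(n : ℝ) - 1)) with hk
  set G : (Fin n → ℝ) → ENNReal := fun x ↦
    ENNReal.ofReal (sampleMax x ^ n) * (ENNReal.ofReal (Real.exp (-∑ i, x i)) * f x) with hG
  have hBm : MeasurableSet B := MeasurableSet.univ_pi fun _ ↦ measurableSet_Ioo
  have hkm : Measurable k := by fun_prop
  have hGm : Measurable G := by
    have := measurable_sampleMax n
    fun_prop
  have hBsmul {t : ℝ} (ht : 0 < t) (x : Fin n → ℝ) :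
      t⁻¹ • x ∈ B ↔ (∀ i, 0 < x i) ∧ sampleMax x < t := by
    simp [hB, sampleMax_lt_iff, inv_mul_lt_iff₀ ht, ht, forall_and]
  have hindm : Measurable fun p : (Fin n → ℝ) × ℝ ↦
      B.indicator (1 : (Fin n → ℝ) → ENNReal) (p.2⁻¹ • p.1) :=
    (measurable_one.indicator hBm).comp (by fun_prop)
  calc
    _ = ∫⁻ x, ∫⁻ t in Ioi 0, k t * (B.indicator 1 (t⁻¹ • x) * G x) := by
      rw [lintegral_iidExp_one n hf,
        ← lintegral_indicator (MeasurableSet.univ_pi fun _ ↦ measurableSet_Ioi)]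
      refine lintegral_congr fun x ↦ ?_
      by_cases hx : ∀ i, 0 < x i
      · have hM := sampleMax_pos hx
        have : ∫⁻ t in Ioi 0, k t * (B.indicator 1 (t⁻¹ • x) * G x) =
            ∫⁻ t in Ioi 0, (Ioi (sampleMax x)).indicator k t * G x := by
          refine setLIntegral_congr_fun measurableSet_Ioi fun t ht ↦ ?_
          by_cases h : sampleMax x < t <;> simp [indicator, hBsmul ht, hx, h]
        rw [this, lintegral_mul_const _ (hkm.indicator measurableSet_Ioi),
          setLIntegral_indicator measurableSet_Ioi, Ioi_inter_Ioi, sup_eq_left.2 hM.le,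
          lintegral_Ioi_mul_rpow hM, hG, ← mul_assoc, ← ENNReal.ofReal_mul (by positivity),
          inv_mul_cancel₀ (by positivity)]
        simp [hx]
      · rw [setLIntegral_congr_fun (g := 0) measurableSet_Ioi fun t ht ↦ by
          simp [indicator, hBsmul ht, hx]]
        simp [hx]
    _ = ∫⁻ t in Ioi 0, k t * ∫⁻ x, B.indicator 1 (t⁻¹ • x) * G x := by
      rw [lintegral_lintegral_swap (by fun_prop)]
      exact lintegral_congr fun t ↦ lintegral_const_mul _ (by fun_prop)
    _ = ∫⁻ t in Ioi 0, ∫⁻ x in B, k t * (ENNReal.ofReal (t ^ n) * G (t • x)) := by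
      refine setLIntegral_congr_fun measurableSet_Ioi fun t (ht : 0 < t) ↦ ?_
      rw [lintegral_eq_mul_lintegral_comp_smul ht (by fun_prop),
        lintegral_const_mul _ (by fun_prop), lintegral_const_mul _ (by fun_prop),
        ← lintegral_indicator hBm]
      congr 3 with x
      rw [inv_smul_smul₀ ht.ne']
      simp [indicator]
    _ = ∫⁻ x in B, ∫⁻ t in Ioi 0, k t * (ENNReal.ofReal (t ^ n) * G (t • x)) :=
      lintegral_lintegral_swap (by fun_prop)
    _ = _ := by
      refine setLIntegral_congr_fun hBm fun x hxB ↦ ?_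
      have hx : ∀ i, 0 < x i := fun i ↦ (hxB i trivial).1
      have hM := sampleMax_pos hx
      have hS := Finset.sum_pos (fun i _ ↦ hx i) Finset.univ_nonempty
      have : ∫⁻ t in Ioi 0, k t * (ENNReal.ofReal (t ^ n) * G (t • x)) =
          ∫⁻ t in Ioi 0, f x * ENNReal.ofReal (n * sampleMax x ^ n) *
            ENNReal.ofReal (t ^ ((n : ℝ) - 1) * Real.exp (-((∑ i, x i) * t))) := by
        refine setLIntegral_congr_fun measurableSet_Ioi fun t (ht : 0 < t) ↦ ?_
        simp only [hk, hG, hscale t ht x hx, sampleMax_smul ht.le, Pi.smul_apply, smul_eq_mul,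
          ← Finset.mul_sum]
        rw [mul_comm (∑ i, x i) t, mul_comm _ (f x), mul_left_comm _ (f x), mul_left_comm _ (f x),
          mul_left_comm _ (f x), mul_assoc, ← ENNReal.ofReal_mul (by positivity),
          ← ENNReal.ofReal_mul (by positivity), ← ENNReal.ofReal_mul (by positivity),
          ← ENNReal.ofReal_mul (by positivity)]
        congr 2
        rw [Real.rpow_sub ht, Real.rpow_sub ht, Real.rpow_neg ht.le, Real.rpow_natCast,
          Real.rpow_one]
        field_simp
        rw [mul_pow]
      rw [this, lintegral_const_mul _ (by fun_prop), lintegral_Ioi_pow_mul_exp hS, mul_assoc,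
        ← ENNReal.ofReal_mul (by positivity)]
      congr 2
      rw [tau, sampleMean]
      field_simp
      rw [← mul_pow, mul_div_cancel₀ _ hM.ne']

/-- The Neyman-Pearson comparison: if `g` prefers the region `k ≤ w` to the region `w ≤ k`, and `f`
has no larger integral than `g`, then `f` has no larger integral than `g` against `w`. -/
theorem lintegral_mul_le_of_neyman_pearson {Ω : Type*} [MeasurableSpace Ω] {μ : Measure Ω}
    {f g w : Ω → ENNReal} {k : ENNReal} (hk : k ≠ ⊤)
    (hg : Measurable g) (hf : Measurable f) (hw : Measurable w) (hgfin : ∫⁻ x, g x ∂μ ≠ ⊤)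
    (hle : ∫⁻ x, f x ∂μ ≤ ∫⁻ x, g x ∂μ)
    (h : ∀ᵐ x ∂μ, f x * w x + g x * k ≤ g x * w x + f x * k) :
    ∫⁻ x, f x * w x ∂μ ≤ ∫⁻ x, g x * w x ∂μ := by
  have key := lintegral_mono_ae h
  rw [lintegral_add_left (by fun_prop), lintegral_add_left (by fun_prop),
    lintegral_mul_const _ hg, lintegral_mul_const _ hf] at key
  refine (ENNReal.add_le_add_iff_right (ENNReal.mul_ne_top hgfin hk)).1 (key.trans ?_)
  gcongr

/-- The test `1{τ_n ≤ c_α}` is the most powerful scale-free test of level `α` for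
uniform (null) versus exponential (alternative). -/
theorem most_powerful_scale_free_test
    (n : ℕ) (hn : 2 ≤ n) (α : ℝ) (hα : α ∈ Set.Ioo (0 : ℝ) 1) (c : ℝ)
    (hc : iidUniform n 1 {x | tau x ≤ c} = ENNReal.ofReal α)
    (φ : (Fin n → ℝ) → ℝ) (hφmeas : Measurable φ)
    (hφval : ∀ x, φ x = 0 ∨ φ x = 1)
    (hφscale : ∀ t : ℝ, 0 < t → ∀ x : Fin n → ℝ, (∀ i, 0 < x i) → φ (t • x) = φ x)
    (hlevel : ∫ x, φ x ∂(iidUniform n 1) ≤ α) :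
    ∫ x, φ x ∂(iidExp n 1) ≤ (iidExp n 1 {x | tau x ≤ c}).toReal := by
  have : NeZero n := ⟨by omega⟩
  have hn0 : (0 : ℝ) < n := by exact_mod_cast NeZero.pos n
  have hφ0 (x) : 0 ≤ φ x := by rcases hφval x with h | h <;> simp [h]
  have hφ1 (x) : φ x ≤ 1 := by rcases hφval x with h | h <;> simp [h]
  have : IsProbabilityMeasure (expMeasure 1) := isProbabilityMeasure_expMeasure one_pos
  have : IsProbabilityMeasure (iidExp n 1) := by unfold iidExp; infer_instance
  have : IsFiniteMeasure (iidUniform n 1) :=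
    ⟨by simp [iidUniform_one_eq_restrict, volume_pi_pi]⟩
  have hset : MeasurableSet {x : Fin n → ℝ | tau x ≤ c} :=
    measurableSet_le (measurable_tau n) measurable_const
  have hpos : ∀ᵐ x ∂(iidUniform n 1), ∀ i, 0 < x i := by
    rw [iidUniform_one_eq_restrict]
    filter_upwards [ae_restrict_mem (MeasurableSet.univ_pi fun _ ↦ measurableSet_Ioo)] with x hx i
    exact (hx i trivial).1
  have hcpos : 0 < c := by
    by_contra! hc0
    have : iidUniform n 1 {x | tau x ≤ c} = 0 := by
      refine measure_eq_zero_iff_ae_notMem.2 ?_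
      filter_upwards [hpos] with x hx h
      exact absurd (tau_pos hx) (not_lt.2 (le_trans h hc0))
    rw [hc, ENNReal.ofReal_eq_zero] at this
    exact absurd hα.1 (not_lt.2 this)
  have hint : Integrable φ (iidUniform n 1) :=
    .of_bound hφmeas.aestronglyMeasurable 1 (ae_of_all _ fun x ↦ by simp [abs_of_nonneg, hφ0, hφ1])
  rw [integral_eq_lintegral_of_nonneg_ae (ae_of_all _ hφ0) hφmeas.aestronglyMeasurable]
  refine ENNReal.toReal_mono (measure_ne_top _ _) ?_
  rw [← lintegral_indicator_one hset,
    lintegral_iidExp_eq_lintegral_cube (by fun_prop) fun t ht x hx ↦ by rw [hφscale t ht x hx],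
    lintegral_iidExp_eq_lintegral_cube (measurable_one.indicator hset)
      fun t ht x hx ↦ by simp [indicator, tau_smul ht],
    ← iidUniform_one_eq_restrict]
  have hΓ := Real.Gamma_pos_of_pos hn0
  refine lintegral_mul_le_of_neyman_pearson
    (k := ENNReal.ofReal (n * Real.Gamma n * ((n * c) ^ n)⁻¹)) ENNReal.ofReal_ne_top
    (measurable_one.indicator hset) (by fun_prop) ?_ ?_ ?_ ?_
  · have := measurable_tau n
    fun_prop
  · rw [lintegral_indicator_one hset]
    exact measure_ne_top _ _
  · rw [lintegral_indicator_one hset, hc,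
      ← ofReal_integral_eq_lintegral_ofReal hint (ae_of_all _ hφ0)]
    exact ENNReal.ofReal_le_ofReal hlevel
  · filter_upwards [hpos] with x hx
    have hτ := tau_pos hx
    by_cases h : tau x ≤ c <;> rcases hφval x with hφx | hφx <;> simp [h, hφx] <;> gcongr
    exact (not_le.1 h).le
end

section
/- Let n ≥ 2 and let X_1,…,X_n be i.i.d. Uniform[0,1] random variables. Then the random vector Y = (X_1/X_n, …, X_{n−1}/X_n) has probability density function on (0,∞)^{n−1} given by L_0(y_1,…,y_{n−1}) = 1 / ( n · (max{1, y_1, …, y_{n−1}})^n ). -/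
open MeasureTheory ProbabilityTheory

/-- The uniform law on `[0, 1]` is Lebesgue measure restricted to `(0, 1]`. -/
theorem uniformMeasure_one : uniformMeasure 1 = volume.restrict (Set.Ioc (0 : ℝ) 1) := by
  simp [uniformMeasure, restrict_Ioc_eq_restrict_Icc]

/-- The points of the open positive ray through `y` with parameter at most `1` that lie in the
cube `(0, 1]^m` form the segment of parameters `(0, 1 / max {1, y_1, …, y_m}]`. -/
theorem setOf_mul_mem_Ioc_eq_Ioc {m : ℕ} [NeZero m] {y : Fin m → ℝ} (hy : ∀ i, 0 < y i) :
    {t | t ∈ Set.Ioc (0 : ℝ) 1 ∧ ∀ i, t * y i ∈ Set.Ioc (0 : ℝ) 1} =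
      Set.Ioc 0 (max 1 (⨆ i, y i))⁻¹ := by
  ext t
  have hM : 0 < max 1 (⨆ i, y i) := lt_max_of_lt_left one_pos
  simp only [Set.mem_ofPred_eq, Set.mem_Ioc]
  constructor
  · rintro ⟨⟨h0, h1⟩, h⟩
    refine ⟨h0, (le_inv_comm₀ h0 hM).2 (max_le ((one_le_inv₀ h0).2 h1) (ciSup_le fun i => ?_))⟩
    rw [← one_div, le_div_iff₀ h0, mul_comm]
    exact (h i).2
  · rintro ⟨h0, h1⟩
    have h := (le_inv_comm₀ h0 hM).1 h1
    refine ⟨⟨h0, (one_le_inv₀ h0).1 ((le_max_left _ _).trans h)⟩, fun i =>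
      ⟨mul_pos h0 (hy i), ?_⟩⟩
    have hi := ((le_ciSup (Set.finite_range y).bddAbove i).trans (le_max_right _ _)).trans h
    rwa [← one_div, le_div_iff₀ h0, mul_comm] at hi

theorem lintegral_Ioc_ofReal_pow (m : ℕ) {a : ℝ} (ha : 0 ≤ a) :
    ∫⁻ t in Set.Ioc 0 a, ENNReal.ofReal (t ^ m) = ENNReal.ofReal (a ^ (m + 1) / (m + 1)) := by
  rw [← ofReal_integral_eq_lintegral_ofReal, ← intervalIntegral.integral_of_le ha, integral_pow]
  · simp
  · exact (continuous_pow m).integrableOn_Ioc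
  · filter_upwards [ae_restrict_mem measurableSet_Ioc] with t ht using pow_nonneg ht.1.le m

/-- Integrating the Jacobian `t ^ m` over the parameters `t ∈ (0, 1]` with `t • y ∈ (0, 1]^m`. -/
theorem lintegral_indicator_mul_mem_Ioc {m : ℕ} [NeZero m] (y : Fin m → ℝ) :
    ∫⁻ t in Set.Ioc (0 : ℝ) 1,
        {t | ∀ i, t * y i ∈ Set.Ioc (0 : ℝ) 1}.indicator (fun t => ENNReal.ofReal (t ^ m)) t =
      ENNReal.ofReal
        (if ∀ i, 0 < y i then (((m + 1 : ℕ) : ℝ) * (max 1 (⨆ i, y i)) ^ (m + 1))⁻¹ else 0) := by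
  have hmeas : MeasurableSet {t | ∀ i, t * y i ∈ Set.Ioc (0 : ℝ) 1} := by
    rw [Set.ofPred_forall]
    exact .iInter fun i => (measurable_id.mul_const (y i)) measurableSet_Ioc
  split_ifs with hy
  · rw [lintegral_indicator hmeas, Measure.restrict_restrict hmeas, Set.inter_comm]
    have h := setOf_mul_mem_Ioc_eq_Ioc hy
    rw [Set.ofPred_and, Set.ofPred_mem_eq] at h
    rw [h, lintegral_Ioc_ofReal_pow m (by positivity)]
    congr 1
    push_cast
    rw [mul_inv, inv_pow, div_eq_mul_inv, mul_comm]
  · rw [ENNReal.ofReal_zero, setLIntegral_congr_fun (g := 0) measurableSet_Ioc]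
    · simp
    · intro t ht
      refine Set.indicator_of_notMem (fun h => hy fun i => ?_) _
      exact (mul_pos_iff_of_pos_left ht.1).1 (h i).1

/-- Change of variables `x = t • y` for Lebesgue measure on the cube `(0, 1]^m`. -/
theorem pi_restrict_Ioc_preimage_div {m : ℕ} {t : ℝ} (ht : 0 < t) {s : Set (Fin m → ℝ)}
    (hs : MeasurableSet s) :
    (Measure.pi fun _ : Fin m => volume.restrict (Set.Ioc (0 : ℝ) 1))
        ((fun x i => x i / t) ⁻¹' s) =
      ∫⁻ y in s,
        {t | ∀ i, t * y i ∈ Set.Ioc (0 : ℝ) 1}.indicator (fun t => ENNReal.ofReal (t ^ m)) t := by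
  have hC : MeasurableSet {y : Fin m → ℝ | ∀ i, t * y i ∈ Set.Ioc (0 : ℝ) 1} := by
    rw [Set.ofPred_forall]
    refine .iInter fun i => ?_
    have h : Measurable fun y : Fin m → ℝ => t * y i := by fun_prop
    exact h measurableSet_Ioc
  have hmeas : Measurable fun (x : Fin m → ℝ) i => x i / t := by fun_prop
  have hset : (fun (x : Fin m → ℝ) i => x i / t) ⁻¹' s ∩ Set.univ.pi (fun _ => Set.Ioc 0 1) =
      (t⁻¹ • ·) ⁻¹' ({y : Fin m → ℝ | ∀ i, t * y i ∈ Set.Ioc (0 : ℝ) 1} ∩ s) := by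
    ext x
    have hx : (fun i => x i / t) = t⁻¹ • x := by
      ext i
      simp [div_eq_inv_mul]
    simp [hx, ht.ne', and_comm]
  have hind : ∀ y : Fin m → ℝ,
      {t | ∀ i, t * y i ∈ Set.Ioc (0 : ℝ) 1}.indicator (fun t => ENNReal.ofReal (t ^ m)) t =
      {y : Fin m → ℝ | ∀ i, t * y i ∈ Set.Ioc (0 : ℝ) 1}.indicator
        (fun _ => ENNReal.ofReal (t ^ m)) y := fun _ => rfl
  simp_rw [hind]
  rw [lintegral_indicator_const hC, Measure.restrict_apply hC, ← Measure.restrict_pi_pi,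
    Measure.restrict_apply (hmeas hs), hset, ← volume_pi,
    Measure.addHaar_preimage_smul _ (inv_ne_zero ht.ne')]
  simp [abs_of_pos ht]

/-- For independent `T` and `X_1, …, X_m`, all uniform on `(0, 1]`, the law of `X / T`. -/
theorem map_div_prod_restrict_Ioc {m : ℕ} [NeZero m] :
    ((volume.restrict (Set.Ioc (0 : ℝ) 1)).prod
        (Measure.pi fun _ : Fin m => volume.restrict (Set.Ioc (0 : ℝ) 1))).map
        (fun p i => p.2 i / p.1) =
      volume.withDensity fun y : Fin m → ℝ => ENNReal.ofReal
        (if ∀ i, 0 < y i then (((m + 1 : ℕ) : ℝ) * (max 1 (⨆ i, y i)) ^ (m + 1))⁻¹ else 0) := by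
  have hf : Measurable fun (p : ℝ × (Fin m → ℝ)) i => p.2 i / p.1 := by fun_prop
  ext s hs
  rw [Measure.map_apply hf hs, Measure.prod_apply (hf hs), withDensity_apply _ hs]
  simp_rw [← lintegral_indicator_mul_mem_Ioc]
  rw [lintegral_lintegral_swap]
  · exact setLIntegral_congr_fun measurableSet_Ioc fun t ht =>
      pi_restrict_Ioc_preimage_div ht.1 hs
  · have hC : MeasurableSet
        {p : (Fin m → ℝ) × ℝ | ∀ i, p.2 * p.1 i ∈ Set.Ioc (0 : ℝ) 1} := by
      rw [Set.ofPred_forall]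
      refine .iInter fun i => ?_
      have h : Measurable fun p : (Fin m → ℝ) × ℝ => p.2 * p.1 i := by fun_prop
      exact h measurableSet_Ioc
    have hg : Measurable fun p : (Fin m → ℝ) × ℝ => ENNReal.ofReal (p.2 ^ m) := by fun_prop
    exact (hg.indicator hC).aemeasurable

/-- Under an i.i.d. `Uniform[0,1]` sample `X_1, …, X_n`, the vector
`(X_1/X_n, …, X_{n-1}/X_n)` has density `y ↦ 1 / (n * max {1, y_1, …, y_{n-1}} ^ n)`
on the positive orthant `(0, ∞)^{n-1}` (and `0` elsewhere). -/
theorem density_ratio_vector_uniform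
    (n : ℕ) (hn : 2 ≤ n) :
    (iidUniform n 1).map
        (fun x (i : Fin (n - 1)) => x (Fin.castLE (Nat.sub_le n 1) i) / x ⟨n - 1, by omega⟩) =
      volume.withDensity fun y : Fin (n - 1) → ℝ =>
        ENNReal.ofReal
          (if ∀ i, 0 < y i then (n * (max 1 (⨆ i, y i)) ^ n)⁻¹ else 0) := by
  obtain ⟨m, rfl⟩ : ∃ m, n = m + 1 := ⟨n - 1, by omega⟩
  have : NeZero m := ⟨by omega⟩
  have hmp := measurePreserving_piFinSuccAbove
    (fun _ : Fin (m + 1) => volume.restrict (Set.Ioc (0 : ℝ) 1)) (Fin.last m)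
  have hf : Measurable fun (p : ℝ × (Fin m → ℝ)) i => p.2 i / p.1 := by fun_prop
  have h := map_div_prod_restrict_Ioc (m := m)
  rw [← hmp.map_eq, Measure.map_map hf hmp.measurable] at h
  simp only [iidUniform, uniformMeasure_one]
  refine Eq.trans ?_ h
  congr 1
  ext x i
  simp [MeasurableEquiv.piFinSuccAbove]
  rfl
end

section
/- Let n ≥ 1 and let x_1,…,x_n > 0 be real numbers. Then Cox's maximum likelihood ratio satisfies ( sup_{λ>0} λ^n · exp(−λ·Σ_{i=1}^n x_i) ) / ( sup_{θ>0} θ^{−n} · 1{x_i ≤ θ for all i} ) = ( x_(n) / (e · x̄_n) )^n = (1/(e·τ_n))^n, where x̄_n = (1/n)·Σ_{i=1}^n x_i, x_(n) = max{x_1,…,x_n}, and τ_n = x̄_n / x_(n). -/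
open MeasureTheory

lemma le_sampleMax {n : ℕ} (x : Fin n → ℝ) (i : Fin n) : x i ≤ sampleMax x :=
  le_ciSup (Set.finite_range x).bddAbove i

/-- The exponential likelihood is maximal at `l = n / s`. -/
lemma iSup_pow_mul_exp_neg_mul {n : ℕ} (hn : 1 ≤ n) {s : ℝ} (hs : 0 < s) :
    (⨆ l : Set.Ioi (0 : ℝ), (l : ℝ) ^ n * Real.exp (-((l : ℝ) * s))) =
      (n / (Real.exp 1 * s)) ^ n := by
  have hn' : (0 : ℝ) < n := by exact_mod_cast hn
  refine IsGreatest.csSup_eq ⟨⟨⟨n / s, div_pos hn' hs⟩, ?_⟩, ?_⟩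
  · have h : -((n : ℝ) / s * s) = n * (-1) := by field_simp
    simp only [h]
    rw [Real.exp_nat_mul, ← mul_pow, Real.exp_neg]
    field_simp
  · rintro _ ⟨⟨l, hl⟩, rfl⟩
    have hl : 0 < l := hl
    have h : -(l * s) = n * (-(l * s / n)) := by field_simp
    simp only [h]
    rw [Real.exp_nat_mul, ← mul_pow]
    refine pow_le_pow_left₀ (by positivity) ?_ n
    have key : l * s / n * Real.exp 1 ≤ Real.exp (l * s / n) := by
      simpa [mul_comm] using Real.exp_one_mul_le_exp (x := l * s / n)
    rw [Real.exp_neg, ← div_eq_mul_inv, div_le_div_iff₀ (Real.exp_pos _) (by positivity)]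
    calc l * (Real.exp 1 * s) = n * (l * s / n * Real.exp 1) := by field_simp
      _ ≤ n * Real.exp (l * s / n) := by gcongr

/-- The uniform likelihood is maximal at the sample maximum. -/
lemma iSup_uniform_likelihood {n : ℕ} {x : Fin n → ℝ} (hx : 0 < sampleMax x) :
    (⨆ θ : Set.Ioi (0 : ℝ), if ∀ i, x i ≤ (θ : ℝ) then ((θ : ℝ) ^ n)⁻¹ else 0) =
      (sampleMax x ^ n)⁻¹ := by
  refine IsGreatest.csSup_eq ⟨⟨⟨sampleMax x, hx⟩, if_pos (le_sampleMax x)⟩, ?_⟩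
  rintro _ ⟨⟨θ, hθ⟩, rfl⟩
  dsimp only
  split_ifs with h
  · have hle : sampleMax x ≤ θ := Real.iSup_le h (le_of_lt hθ)
    gcongr
  · positivity

/-- Cox's maximum likelihood ratio between the exponential and uniform models equals
`(x_(n) / (e * x̄_n))^n = (1 / (e * τ_n))^n`. -/
theorem cox_max_likelihood_ratio
    (n : ℕ) (hn : 1 ≤ n) (x : Fin n → ℝ) (hx : ∀ i, 0 < x i) :
    (⨆ l : Set.Ioi (0 : ℝ), (l : ℝ) ^ n * Real.exp (-((l : ℝ) * ∑ i, x i))) /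
        (⨆ θ : Set.Ioi (0 : ℝ), if ∀ i, x i ≤ (θ : ℝ) then ((θ : ℝ) ^ n)⁻¹ else 0) =
      (sampleMax x / (Real.exp 1 * sampleMean x)) ^ n ∧
    (sampleMax x / (Real.exp 1 * sampleMean x)) ^ n =
      (1 / (Real.exp 1 * tau x)) ^ n := by
  have hn' : (0 : ℝ) < n := by exact_mod_cast hn
  have : Nonempty (Fin n) := ⟨⟨0, hn⟩⟩
  have hsum : 0 < ∑ i, x i := Finset.sum_pos (fun i _ => hx i) Finset.univ_nonempty
  have hmax : 0 < sampleMax x := (hx ⟨0, hn⟩).trans_le (le_sampleMax x _)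
  constructor
  · rw [iSup_pow_mul_exp_neg_mul hn hsum, iSup_uniform_likelihood hmax, div_inv_eq_mul,
      ← mul_pow, sampleMean]
    congr 1
    field_simp
  · rw [tau]
    congr 1
    field_simp
end

section
/- Let n ≥ 2 and let X_1,…,X_n be i.i.d. Exponential(1) random variables. Then S_n = n·τ_n − 1 = Σ_{i=1}^{n−1} X_(i)/X_(n) has probability density function f_{S_n}(s) = n! · I_{n−1}(s) / (1 + s)^n for s ∈ [0, n−1], where I_{n−1} denotes the probability density function of the sum of n−1 independent Uniform[0,1] random variables, τ_n = X̄_n / X_(n), and X_(1) ≤ … ≤ X_(n) are the order statistics. -/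
open MeasureTheory ProbabilityTheory

/-- The order statistics of a sample: the sample rearranged in nondecreasing order. -/
noncomputable def sortedVec {n : ℕ} (x : Fin n → ℝ) : Fin n → ℝ := x ∘ Tuple.sort x

/-- The Irwin–Hall distribution with parameter `m`: the law of the sum of `m`
independent `Uniform[0,1]` random variables. -/
noncomputable def irwinHall (m : ℕ) : Measure ℝ :=
  (iidUniform m 1).map fun u => ∑ i, u i

theorem lintegral_pi_fin_prod {α : Type*} [MeasurableSpace α] (μ : Measure α) [SigmaFinite μ]
    {f : α → ENNReal} (hf : Measurable f) (m : ℕ) (s : Fin m → Set α) :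
    ∫⁻ x in Set.univ.pi s, ∏ i, f (x i) ∂(Measure.pi fun _ : Fin m => μ) =
      ∏ i, ∫⁻ x in s i, f x ∂μ := by
  rw [Measure.restrict_pi_pi]
  induction m with
  | zero => simp
  | succ m ih =>
    have h := (measurePreserving_piFinSuccAbove (fun i => μ.restrict (s i)) 0).symm
    rw [← h.lintegral_comp_emb (MeasurableEquiv.measurableEmbedding _), Fin.prod_univ_succ]
    have ih' := ih fun j => s j.succ
    rw [← ih', ← lintegral_prod_mul hf.aemeasurable
      (Measurable.aemeasurable (by fun_prop))]
    simp [Fin.prod_univ_succ, MeasurableEquiv.piFinSuccAbove]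

theorem pi_fin_withDensity {α : Type*} [MeasurableSpace α] (μ : Measure α) [SigmaFinite μ]
    {f : α → ENNReal} (hf : Measurable f) [SigmaFinite (μ.withDensity f)] (m : ℕ) :
    (Measure.pi fun _ : Fin m => μ.withDensity f) =
      (Measure.pi fun _ : Fin m => μ).withDensity fun x => ∏ i, f (x i) := by
  refine Measure.pi_eq fun s hs => ?_
  rw [withDensity_apply _ (MeasurableSet.univ_pi hs), lintegral_pi_fin_prod μ hf]
  exact Finset.prod_congr rfl fun i _ => (withDensity_apply _ (hs i)).symm

/-- The density `g` is not assumed measurable. -/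
theorem withDensity_mul_of_measurable_left {α : Type*} [MeasurableSpace α] (μ : Measure α)
    [SFinite μ] {c : α → ENNReal} (hc : Measurable c) (hc' : ∀ a, c a ≠ ⊤) (g : α → ENNReal) :
    μ.withDensity (c * g) = (μ.withDensity g).withDensity c := by
  apply le_antisymm
  · obtain ⟨h, hm, hle, heq⟩ := exists_measurable_le_withDensity_eq μ (c * g)
    have hh : h = (h / c) * c := by
      ext a
      by_cases h0 : c a = 0
      · have := hle a
        simp_all
      · simp [ENNReal.div_mul_cancel h0 (hc' a)]
    have hg : h / c ≤ g := fun a => ENNReal.div_le_of_le_mul' (hle a)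
    rw [← heq, hh, withDensity_mul μ (hm.div hc) hc]
    refine Measure.le_iff.2 fun s hs => ?_
    rw [withDensity_apply _ hs, withDensity_apply _ hs]
    exact lintegral_mono' (Measure.restrict_mono le_rfl (withDensity_mono (ae_of_all _ hg))) le_rfl
  · obtain ⟨h, hm, hle, heq⟩ := exists_measurable_le_withDensity_eq μ g
    rw [← heq, ← withDensity_mul μ hm hc, mul_comm]
    exact withDensity_mono (ae_of_all _ fun a => mul_le_mul_right (hle a) _)

theorem setLIntegral_pow_mul_exp_neg_mul_Ioi (m : ℕ) {c : ℝ} (hc : 0 < c) :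
    ∫⁻ t in Set.Ioi (0 : ℝ), ENNReal.ofReal (t ^ m * Real.exp (-(c * t))) =
      ENNReal.ofReal (m.factorial / c ^ (m + 1)) := by
  have h := Real.integral_rpow_mul_exp_neg_mul_Ioi (a := m + 1) (by positivity) hc
  have hpos : 0 < (m.factorial : ℝ) / c ^ (m + 1) := by positivity
  have e : ∀ t : ℝ, t ^ ((m : ℝ) + 1 - 1) * Real.exp (-(c * t)) =
      t ^ m * Real.exp (-(c * t)) := fun t => by simp
  simp only [e, Real.Gamma_nat_eq_factorial] at h
  have hv : (1 / c) ^ ((m : ℝ) + 1) * m.factorial = m.factorial / c ^ (m + 1) := by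
    rw [show ((m : ℝ) + 1) = ((m + 1 : ℕ) : ℝ) by push_cast; rfl, Real.rpow_natCast,
      one_div, inv_pow]
    field_simp
  rw [hv] at h
  rw [← h, ofReal_integral_eq_lintegral_ofReal]
  · by_contra hn
    rw [integral_undef hn] at h
    exact hpos.ne h
  · filter_upwards [ae_restrict_mem measurableSet_Ioi] with t ht
    have : (0 : ℝ) < t := ht
    positivity

theorem iidUniform_one (m : ℕ) :
    iidUniform m 1 = volume.restrict (Set.univ.pi fun _ : Fin m => Set.Icc (0 : ℝ) 1) := by
  rw [iidUniform, volume_pi, Measure.restrict_pi_pi]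
  simp [uniformMeasure]

theorem iidExp_one (m : ℕ) :
    iidExp m 1 = volume.withDensity fun x => ∏ i, exponentialPDF 1 (x i) := by
  have : IsProbabilityMeasure (volume.withDensity (exponentialPDF 1)) :=
    isProbabilityMeasure_expMeasure one_pos
  exact pi_fin_withDensity volume (measurable_exponentialPDFReal 1).ennreal_ofReal m

theorem lintegral_volume_smul {m : ℕ} {t : ℝ} (ht : 0 < t) (G : (Fin m → ℝ) → ENNReal) :
    ∫⁻ y, G y = ENNReal.ofReal (t ^ m) * ∫⁻ u : Fin m → ℝ, G (t • u) := by
  have h := Measure.map_addHaar_smul (volume : Measure (Fin m → ℝ)) ht.ne'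
  have hp : 0 < t ^ m := by positivity
  have := (measurableEmbedding_const_smul₀ ht.ne').lintegral_map
    (μ := (volume : Measure (Fin m → ℝ))) G
  rw [h] at this
  rw [← this, lintegral_smul_measure, smul_eq_mul, ← mul_assoc, ← ENNReal.ofReal_mul hp.le]
  simp [abs_of_pos hp, hp.ne']

theorem prod_exponentialPDF_smul_indicator {m : ℕ} {t : ℝ} (ht : 0 < t) (u : Fin m → ℝ)
    (a : ENNReal) :
    (∏ i, exponentialPDF 1 ((t • u) i)) *
      {y : Fin m → ℝ | ∀ j, y j ≤ t}.indicator (fun _ => a) (t • u) =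
    (Set.univ.pi fun _ : Fin m => Set.Icc (0 : ℝ) 1).indicator
      (fun u => ENNReal.ofReal (Real.exp (-(t * ∑ j, u j))) * a) u := by
  by_cases hu : u ∈ Set.univ.pi fun _ : Fin m => Set.Icc (0 : ℝ) 1
  · have hu' : ∀ j, 0 ≤ u j ∧ u j ≤ 1 := fun j => hu j trivial
    have : t • u ∈ {y : Fin m → ℝ | ∀ j, y j ≤ t} := fun j => by
      simpa using mul_le_mul_of_nonneg_left (hu' j).2 ht.le
    rw [Set.indicator_of_mem hu, Set.indicator_of_mem this]
    congr 1
    rw [Finset.mul_sum, ← Finset.sum_neg_distrib, Real.exp_sum,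
      ENNReal.ofReal_prod_of_nonneg fun _ _ => (Real.exp_pos _).le]
    refine Finset.prod_congr rfl fun j _ => ?_
    rw [exponentialPDF_eq, if_pos (by simpa using mul_nonneg ht.le (hu' j).1)]
    simp
  · rw [Set.indicator_of_notMem hu]
    simp only [Set.mem_pi, Set.mem_univ, true_imp_iff, not_forall] at hu
    obtain ⟨j, hj⟩ := hu
    by_cases h0 : 0 ≤ u j
    · have h1 : 1 < u j := by
        by_contra h1
        exact hj ⟨h0, not_lt.1 h1⟩
      rw [Set.indicator_of_notMem, mul_zero]
      intro hmem
      have := hmem j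
      simp at this
      nlinarith
    · rw [Finset.prod_eq_zero (Finset.mem_univ j), zero_mul]
      rw [exponentialPDF_eq, if_neg, ENNReal.ofReal_zero]
      simp only [Pi.smul_apply, smul_eq_mul]
      nlinarith

theorem setLIntegral_iidExp_le {m : ℕ} {t : ℝ} (ht : 0 < t) {G : (Fin m → ℝ) → ENNReal}
    (hG : Measurable G) :
    ∫⁻ y in {y : Fin m → ℝ | ∀ j, y j ≤ t}, G y ∂iidExp m 1 =
      ENNReal.ofReal (t ^ m) *
        ∫⁻ u, ENNReal.ofReal (Real.exp (-(t * ∑ j, u j))) * G (t • u) ∂iidUniform m 1 := by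
  have hs : MeasurableSet {y : Fin m → ℝ | ∀ j, y j ≤ t} := by
    simp only [Set.ofPred_forall]
    exact MeasurableSet.iInter fun j => measurableSet_le (measurable_pi_apply j) measurable_const
  have hpdf : Measurable (exponentialPDF 1) := (measurable_exponentialPDFReal 1).ennreal_ofReal
  rw [← lintegral_indicator hs, iidExp_one,
    lintegral_withDensity_eq_lintegral_mul _ (by fun_prop) (hG.indicator hs),
    lintegral_volume_smul ht, iidUniform_one,
    ← lintegral_indicator (MeasurableSet.univ_pi fun _ => measurableSet_Icc)]
  congr 2
  ext u
  exact prod_exponentialPDF_smul_indicator ht u (G (t • u))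

theorem expMeasure_one :
    expMeasure 1 = (volume.restrict (Set.Ioi 0)).withDensity
      fun t => ENNReal.ofReal (Real.exp (-t)) := by
  rw [← withDensity_indicator measurableSet_Ioi]
  refine withDensity_congr_ae ?_
  filter_upwards [Measure.ae_ne volume (0 : ℝ)] with t ht
  change exponentialPDF 1 t = _
  rw [exponentialPDF_eq]
  rcases lt_or_gt_of_ne ht with h | h
  · rw [if_neg h.not_ge, Set.indicator_of_notMem (by simpa using h.le), ENNReal.ofReal_zero]
  · rw [if_pos h.le, Set.indicator_of_mem (by simpa using h)]
    simp

theorem ae_expMeasure_one_pos : ∀ᵐ t ∂expMeasure 1, 0 < t := by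
  rw [expMeasure_one]
  exact (withDensity_absolutelyContinuous _ _).ae_le (ae_restrict_mem measurableSet_Ioi)

instance : IsProbabilityMeasure (expMeasure 1) := isProbabilityMeasure_expMeasure one_pos

instance : NullSingletonClass (expMeasure 1) := by
  rw [expMeasure_one]
  infer_instance

instance (m : ℕ) : IsProbabilityMeasure (iidExp m 1) := by
  unfold iidExp
  infer_instance

instance (m : ℕ) : IsProbabilityMeasure (iidUniform m 1) := by
  rw [iidUniform_one]
  constructor
  rw [Measure.restrict_apply_univ, volume_pi, Measure.pi_pi]
  simp

theorem ae_iidExp_pos (m : ℕ) : ∀ᵐ x ∂iidExp m 1, ∀ i, 0 < x i :=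
  Filter.eventually_all.2 fun _ => Measure.tendsto_eval_ae_ae.eventually ae_expMeasure_one_pos

theorem sampleMax_eq_of_forall_le {n : ℕ} {x : Fin n → ℝ} {i : Fin n} (h : ∀ j, x j ≤ x i) :
    sampleMax x = x i := by
  have : Nonempty (Fin n) := ⟨i⟩
  exact le_antisymm (ciSup_le h) (le_ciSup (Set.finite_range x).bddAbove i)

theorem mul_tau_eq {n : ℕ} (hn : n ≠ 0) (x : Fin n → ℝ) :
    (n : ℝ) * tau x = (∑ i, x i) / sampleMax x := by
  have : (n : ℝ) ≠ 0 := by exact_mod_cast hn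
  rw [tau, sampleMean]
  field_simp

theorem measurable_mul_tau_sub_one (n : ℕ) :
    Measurable fun x : Fin n → ℝ => (n : ℝ) * tau x - 1 := by
  have : Measurable fun x : Fin n → ℝ => sampleMax x :=
    Measurable.iSup fun i => measurable_pi_apply i
  unfold tau sampleMean
  fun_prop

theorem ae_iidUniform_sum_mem (m : ℕ) :
    ∀ᵐ u ∂iidUniform m 1, ∑ j, u j ∈ Set.Icc (0 : ℝ) m := by
  rw [iidUniform_one]
  filter_upwards [ae_restrict_mem (MeasurableSet.univ_pi fun _ => measurableSet_Icc)] with u hu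
  refine ⟨Finset.sum_nonneg fun j _ => (hu j trivial).1, ?_⟩
  simpa using Finset.sum_le_card_nsmul Finset.univ u 1 fun j _ => (hu j trivial).2

theorem iidExp_prod_apply (m : ℕ) {B : Set ℝ} (hB : MeasurableSet B) :
    (expMeasure 1).prod (iidExp m 1)
        {p | (∀ j, p.2 j ≤ p.1) ∧ (∑ j, p.2 j) / p.1 ∈ B} =
      ∫⁻ s in B, ENNReal.ofReal (m.factorial / (1 + s) ^ (m + 1)) ∂irwinHall m := by
  have hS : MeasurableSet {p : ℝ × (Fin m → ℝ) | (∀ j, p.2 j ≤ p.1) ∧ (∑ j, p.2 j) / p.1 ∈ B} := by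
    refine MeasurableSet.inter ?_ ?_
    · change MeasurableSet {p : ℝ × (Fin m → ℝ) | ∀ j, p.2 j ≤ p.1}
      simp only [Set.ofPred_forall]
      exact MeasurableSet.iInter fun j => measurableSet_le (by fun_prop) (by fun_prop)
    · exact (show Measurable fun p : ℝ × (Fin m → ℝ) => (∑ j, p.2 j) / p.1 by fun_prop) hB
  have hone : Measurable (B.indicator (1 : ℝ → ENNReal)) := measurable_one.indicator hB
  have hsection : ∀ t ∈ Set.Ioi (0 : ℝ),
      iidExp m 1 (Prod.mk t ⁻¹' {p | (∀ j, p.2 j ≤ p.1) ∧ (∑ j, p.2 j) / p.1 ∈ B}) =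
        ENNReal.ofReal (t ^ m) *
          ∫⁻ u, ENNReal.ofReal (Real.exp (-(t * ∑ j, u j))) * B.indicator 1 (∑ j, u j)
            ∂iidUniform m 1 := by
    intro t ht
    have ht0 : t ≠ 0 := ne_of_gt ht
    have hG : Measurable fun y : Fin m → ℝ => B.indicator (1 : ℝ → ENNReal) ((∑ j, y j) / t) :=
      hone.comp (by fun_prop)
    have hpre : MeasurableSet ((fun y : Fin m → ℝ => (∑ j, y j) / t) ⁻¹' B) :=
      (show Measurable fun y : Fin m → ℝ => (∑ j, y j) / t by fun_prop) hB
    have h := setLIntegral_iidExp_le ht hG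
    have hu : ∀ u : Fin m → ℝ, (∑ j, (t • u) j) / t = ∑ j, u j := fun u => by
      simp [← Finset.mul_sum, ht0]
    simp only [hu] at h
    rw [← h]
    have hind : (fun y : Fin m → ℝ => B.indicator (1 : ℝ → ENNReal) ((∑ j, y j) / t)) =
        ((fun y : Fin m → ℝ => (∑ j, y j) / t) ⁻¹' B).indicator 1 := rfl
    rw [hind, lintegral_indicator_one hpre, Measure.restrict_apply hpre, Set.inter_comm]
    rfl
  rw [Measure.prod_apply hS, expMeasure_one,
    lintegral_withDensity_eq_lintegral_mul _ (by fun_prop) (measurable_measure_prodMk_left hS)]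
  calc
    _ = ∫⁻ t in Set.Ioi (0 : ℝ), ∫⁻ u, ENNReal.ofReal (t ^ m * Real.exp (-((1 + ∑ j, u j) * t))) *
          B.indicator 1 (∑ j, u j) ∂iidUniform m 1 := by
      refine setLIntegral_congr_fun measurableSet_Ioi fun t ht => ?_
      have ht' : (0 : ℝ) < t := ht
      rw [Pi.mul_apply, hsection t ht, ← mul_assoc, ← ENNReal.ofReal_mul (Real.exp_pos _).le,
        ← lintegral_const_mul']
      · refine lintegral_congr fun u => ?_
        rw [← mul_assoc, ← ENNReal.ofReal_mul (by positivity)]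
        congr 2
        rw [mul_right_comm, ← Real.exp_add, mul_comm]
        congr 2
        ring
      · exact ENNReal.ofReal_ne_top
    _ = ∫⁻ u, (∫⁻ t in Set.Ioi (0 : ℝ),
          ENNReal.ofReal (t ^ m * Real.exp (-((1 + ∑ j, u j) * t))) *
            B.indicator 1 (∑ j, u j)) ∂iidUniform m 1 := by
      refine lintegral_lintegral_swap (Measurable.aemeasurable ?_)
      refine Measurable.mul (by fun_prop) (hone.comp (by fun_prop))
    _ = ∫⁻ u, B.indicator (fun s => ENNReal.ofReal (m.factorial / (1 + s) ^ (m + 1))) (∑ j, u j)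
          ∂iidUniform m 1 := by
      refine lintegral_congr_ae ?_
      filter_upwards [ae_iidUniform_sum_mem m] with u hu
      rw [lintegral_mul_const _ (by fun_prop),
        setLIntegral_pow_mul_exp_neg_mul_Ioi m (by linarith [hu.1])]
      by_cases h : ∑ j, u j ∈ B <;> simp [h]
    _ = _ := by
      rw [← lintegral_indicator hB, irwinHall, lintegral_map _ (by fun_prop)]
      exact Measurable.indicator (by fun_prop) hB

theorem iidExp_argmax_inter (m : ℕ) (i : Fin (m + 1)) {B : Set ℝ} (hB : MeasurableSet B) :
    iidExp (m + 1) 1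
        {x | (∀ j, x j ≤ x i) ∧ ((m + 1 : ℕ) : ℝ) * tau x - 1 ∈ B} =
      ∫⁻ s in B, ENNReal.ofReal (m.factorial / (1 + s) ^ (m + 1)) ∂irwinHall m := by
  have h := measurePreserving_piFinSuccAbove (fun _ : Fin (m + 1) => expMeasure 1) i
  rw [← iidExp_prod_apply m hB]
  refine Eq.trans ?_ (h.measure_preimage_equiv _)
  refine measure_congr ?_
  filter_upwards [ae_iidExp_pos (m + 1)] with x hx
  apply propext
  change ((∀ j, x j ≤ x i) ∧ _ ∈ B) ↔
    ((∀ j, x (i.succAbove j) ≤ x i) ∧ (∑ j, x (i.succAbove j)) / x i ∈ B)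
  rw [Fin.forall_iff_succAbove i]
  simp only [le_refl, true_and]
  refine and_congr_right fun hle => ?_
  have hmax : sampleMax x = x i :=
    sampleMax_eq_of_forall_le ((Fin.forall_iff_succAbove i).2 ⟨le_rfl, hle⟩)
  rw [mul_tau_eq m.succ_ne_zero, hmax, Fin.sum_univ_succAbove x i, add_div,
    div_self (hx i).ne', add_sub_cancel_left]

theorem iidExp_setOf_eq_null (m : ℕ) {i j : Fin (m + 1)} (hij : i ≠ j) :
    iidExp (m + 1) 1 {x | x j = x i} = 0 := by
  obtain ⟨k, rfl⟩ := Fin.exists_succAbove_eq hij.symm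
  have h := measurePreserving_piFinSuccAbove (fun _ : Fin (m + 1) => expMeasure 1) i
  have hS : MeasurableSet {p : ℝ × (Fin m → ℝ) | p.2 k = p.1} :=
    measurableSet_eq_fun (by fun_prop) (by fun_prop)
  refine (h.measure_preimage_equiv {p : ℝ × (Fin m → ℝ) | p.2 k = p.1}).trans ?_
  rw [Measure.measure_prod_null hS]
  exact ae_of_all _ fun t => Measure.pi_hyperplane (fun _ => expMeasure 1) k t

theorem iidExp_map_mul_tau_sub_one (m : ℕ) :
    (iidExp (m + 1) 1).map (fun x => ((m + 1 : ℕ) : ℝ) * tau x - 1) =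
      (irwinHall m).withDensity fun s =>
        ENNReal.ofReal ((m + 1).factorial / (1 + s) ^ (m + 1)) := by
  ext B hB
  have hT := measurable_mul_tau_sub_one (m + 1)
  rw [Measure.map_apply hT hB, withDensity_apply _ hB]
  have hU : (fun x : Fin (m + 1) → ℝ => ((m + 1 : ℕ) : ℝ) * tau x - 1) ⁻¹' B =
      ⋃ i, {x | (∀ j, x j ≤ x i) ∧ ((m + 1 : ℕ) : ℝ) * tau x - 1 ∈ B} := by
    ext x
    obtain ⟨i, hi⟩ := Finite.exists_max x
    simp only [Set.mem_preimage, Set.mem_iUnion]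
    exact ⟨fun h => ⟨i, hi, h⟩, fun ⟨_, _, h⟩ => h⟩
  rw [hU, measure_iUnion₀, tsum_fintype]
  · simp only [iidExp_argmax_inter m _ hB, Finset.sum_const, Finset.card_univ, Fintype.card_fin]
    rw [nsmul_eq_mul, ← lintegral_const_mul' _ _ (by simp)]
    refine lintegral_congr fun s => ?_
    rw [← ENNReal.ofReal_natCast, ← ENNReal.ofReal_mul (by positivity), Nat.factorial_succ]
    push_cast
    rw [mul_div_assoc]
  · intro i j hij
    refine measure_mono_null (fun x hx => ?_) (iidExp_setOf_eq_null m hij)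
    exact le_antisymm (hx.1.1 j) (hx.2.1 i)
  · intro i
    refine MeasurableSet.nullMeasurableSet (MeasurableSet.inter ?_ (hT hB))
    change MeasurableSet {x : Fin (m + 1) → ℝ | ∀ j, x j ≤ x i}
    simp only [Set.ofPred_forall]
    exact MeasurableSet.iInter fun j => measurableSet_le (by fun_prop) (by fun_prop)

theorem sortedVec_last {m : ℕ} (x : Fin (m + 1) → ℝ) :
    sortedVec x (Fin.last m) = sampleMax x := by
  refine (sampleMax_eq_of_forall_le (i := Tuple.sort x (Fin.last m)) fun j => ?_).symm
  have h := Tuple.monotone_sort x (Fin.le_last ((Tuple.sort x).symm j))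
  simpa using h

theorem sum_sortedVec {n : ℕ} (x : Fin n → ℝ) : ∑ i, sortedVec x i = ∑ i, x i :=
  Equiv.sum_comp (Tuple.sort x) x

theorem mul_tau_sub_one_eq_sum {m : ℕ} {x : Fin (m + 1) → ℝ} (hx : sampleMax x ≠ 0) :
    ((m + 1 : ℕ) : ℝ) * tau x - 1 =
      ∑ i : Fin m, sortedVec x i.castSucc / sortedVec x (Fin.last m) := by
  rw [mul_tau_eq m.succ_ne_zero, ← sum_sortedVec, Fin.sum_univ_castSucc, sortedVec_last,
    add_div, div_self hx, add_sub_cancel_right, Finset.sum_div]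

/-- Under an i.i.d. `Exponential(1)` sample, `S_n = n·τ_n − 1 = ∑_{i=1}^{n-1} X_(i)/X_(n)`
has density `s ↦ n! · I_{n-1}(s) / (1+s)^n` on `[0, n−1]`, where `I_{n-1}` is the
Irwin–Hall density with parameter `n − 1`. -/
theorem n_tau_sub_one_density_exponential
    (n : ℕ) (hn : 2 ≤ n)
    (I : ℝ → ℝ)
    (hI : irwinHall (n - 1) = volume.withDensity fun s => ENNReal.ofReal (I s)) :
    (∀ᵐ x ∂iidExp n 1,
      (n : ℝ) * tau x - 1 =
        ∑ i : Fin (n - 1),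
          sortedVec x (Fin.castLE (Nat.sub_le n 1) i) / sortedVec x ⟨n - 1, by omega⟩) ∧
    (iidExp n 1).map (fun x => (n : ℝ) * tau x - 1) =
      volume.withDensity fun s =>
        ENNReal.ofReal
          (if s ∈ Set.Icc (0 : ℝ) ((n : ℝ) - 1) then
            (Nat.factorial n : ℝ) * I s / (1 + s) ^ n
          else 0) := by
  obtain ⟨m, rfl⟩ : ∃ m, n = m + 1 := ⟨n - 1, by omega⟩
  simp only [Nat.add_sub_cancel] at hI ⊢
  refine ⟨?_, ?_⟩
  · filter_upwards [ae_iidExp_pos (m + 1)] with x hx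
    refine mul_tau_sub_one_eq_sum ?_
    obtain ⟨i, hi⟩ := Finite.exists_max x
    rw [sampleMax_eq_of_forall_le hi]
    exact (hx i).ne'
  · have hmem : ∀ᵐ s ∂irwinHall m, s ∈ Set.Icc (0 : ℝ) m :=
      (ae_map_iff (by fun_prop) measurableSet_Icc).2 (ae_iidUniform_sum_mem m)
    have hc : Measurable fun s : ℝ =>
        ENNReal.ofReal (((m + 1).factorial : ℝ) / (1 + s) ^ (m + 1)) := by fun_prop
    have hind : (fun s => ENNReal.ofReal (((m + 1).factorial : ℝ) / (1 + s) ^ (m + 1)))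
        =ᵐ[irwinHall m] (Set.Icc (0 : ℝ) m).indicator fun s =>
          ENNReal.ofReal (((m + 1).factorial : ℝ) / (1 + s) ^ (m + 1)) := by
      filter_upwards [hmem] with s hs
      rw [Set.indicator_of_mem hs]
    rw [iidExp_map_mul_tau_sub_one, withDensity_congr_ae hind, hI,
      ← withDensity_mul_of_measurable_left _ (hc.indicator measurableSet_Icc)]
    · congr 1
      ext s
      have hm : ((m + 1 : ℕ) : ℝ) - 1 = m := by simp
      rw [hm, Pi.mul_apply]
      by_cases hs : s ∈ Set.Icc (0 : ℝ) m
      · have : 0 ≤ ((m + 1).factorial : ℝ) / (1 + s) ^ (m + 1) :=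
          div_nonneg (by positivity) (pow_nonneg (by linarith [hs.1]) _)
        rw [Set.indicator_of_mem hs, if_pos hs, ← ENNReal.ofReal_mul this, div_mul_eq_mul_div]
      · rw [Set.indicator_of_notMem hs, if_neg hs, zero_mul, ENNReal.ofReal_zero]
    · intro s
      by_cases hs : s ∈ Set.Icc (0 : ℝ) m <;> simp [Set.indicator, hs]
end
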